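/- arXiv:2310.02004 — 2 statements merged into one kernel-verified Lean document; each statement's English description precedes it below -/
import Mathlib

section
/- Fix d ≥ 1 and positive reals r, s. For every λ ∈ (0,∞)^d, the Kullback–Leibler risk R(λ, p_J) = Σ_{x∈ℕ^d} p_r(x|λ) Σ_{y∈ℕ^d} p_s(y|λ) log(p_s(y|λ)/p_J(y|x)) is strictly less than 0.52 · d · log((r+s)/r). -/
/-- Joint pmf of `d` independent Poisson variables with means `c * lam i`. -/
noncomputable def poissonPMF (d : ℕ) (c : ℝ) (lam : Fin d → ℝ) (x : Fin d → ℕ) : ℝ :=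
  ∏ i, Real.exp (-(c * lam i)) * (c * lam i) ^ (x i) / (Nat.factorial (x i) : ℝ)

/-- Bayesian predictive distribution based on the Jeffreys prior. -/
noncomputable def pJ (d : ℕ) (r s : ℝ) (x y : Fin d → ℕ) : ℝ :=
  (r / (r + s)) ^ ((∑ i, (x i : ℝ)) + (d : ℝ) / 2) * (s / (r + s)) ^ (∑ i, y i)
    * ∏ i, Real.Gamma ((x i : ℝ) + (y i : ℝ) + 1 / 2)
        / (Real.Gamma ((x i : ℝ) + 1 / 2) * (Nat.factorial (y i) : ℝ))

/-- Kullback–Leibler risk of a predictive distribution `q` (with `q x y = q(y; x)`). -/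
noncomputable def klRisk (d : ℕ) (r s : ℝ) (lam : Fin d → ℝ)
    (q : (Fin d → ℕ) → (Fin d → ℕ) → ℝ) : ℝ :=
  ∑' x : Fin d → ℕ, poissonPMF d r lam x *
    ∑' y : Fin d → ℕ, poissonPMF d s lam y * Real.log (poissonPMF d s lam y / q x y)

open MeasureTheory Real Filter Set
open scoped ProbabilityTheory NNReal Nat Topology

/-!
By Bayes' rule, `p_s(y|λ) / p_J(y|x)` is a ratio of Jeffreys posterior densities at `λ`, given
`(x, y)` and given `x`. For independent Poisson counts the risk is therefore the sum over the
coordinates of `L ((r + s) λᵢ) - L (r λᵢ)`, where `L m` is the mean log posterior density at the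
true parameter, and it suffices that `L' m < 0.52 / m`. With `K` Poisson of mean `m`,
`L' m = log m - E log (K + 1/2) + 1 / (2m)`, so the claim is `log m - E log (K + 1/2) < 0.02 / m`.

The digamma function linearises the logarithm: `E ψ(K + 1) = log m + E₁(m)` with `E₁` the
exponential integral, and `E₁(m) ≥ exp (-m) / (m + 1)`. Since
`ψ(k + 1) ≤ log (k + 1/2) + 1 / (24 (k + 1/2)²)`, only the mean of the last term remains to be
bounded, and the Stein–Chen identity `m E f(K) = E[K f(K - 1)]` turns it into an average of
`k / (24 (k - 1/2)²)`, which is at most `0.02` once `k ≥ 3`.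
-/

section ProductIntegral

variable {ι : Type*} [Fintype ι] {α : ι → Type*} [∀ i, MeasurableSpace (α i)]
  {μ : ∀ i, Measure (α i)} [∀ i, IsProbabilityMeasure (μ i)] {f : ∀ i, α i → ℝ}

lemma integral_sum_comp_eval (hf : ∀ i, Integrable (f i) (μ i)) :
    ∫ x, ∑ i, f i (x i) ∂Measure.pi μ = ∑ i, ∫ a, f i a ∂μ i := by
  rw [integral_finsetSum _ fun i _ ↦ integrable_comp_eval (hf i)]
  exact Finset.sum_congr rfl fun i _ ↦ integral_comp_eval (hf i).aestronglyMeasurable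

lemma tsum_prod_real_mul_sum [∀ i, Countable (α i)] [∀ i, MeasurableSingletonClass (α i)]
    (hf : ∀ i, Integrable (f i) (μ i)) :
    ∑' x : ∀ i, α i, (∏ i, (μ i).real {x i}) * ∑ i, f i (x i) = ∑ i, ∫ a, f i a ∂μ i := by
  rw [← integral_sum_comp_eval hf, integral_countable
    (integrable_finsetSum _ fun i _ ↦ integrable_comp_eval (hf i))]
  simp_rw [measureReal_def, Measure.pi_singleton, ENNReal.toReal_prod, smul_eq_mul]

end ProductIntegral

section PoissonIntegrals

variable {f : ℕ → ℝ}

lemma integral_poissonMeasure_eq_exp_mul_tsum (r : ℝ≥0) (f : ℕ → ℝ) :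
    ∫ k, f k ∂Po(r) = exp (-r) * ∑' k, (r : ℝ) ^ k / k ! * f k := by
  simp_rw [ProbabilityTheory.integral_poissonMeasure, smul_eq_mul, mul_div_assoc, mul_assoc,
    tsum_mul_left]

lemma summable_pow_div_factorial_mul_of_integrable {r : ℝ≥0} (hf : Integrable f Po(r)) :
    Summable fun k ↦ (r : ℝ) ^ k / k ! * f k := by
  have h := (ProbabilityTheory.hasSum_integral_poissonMeasure hf).summable
  simp_rw [smul_eq_mul, mul_div_assoc, mul_assoc] at h
  exact (summable_mul_left_iff (exp_pos _).ne').mp h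

lemma integrable_poissonMeasure_of_abs_le_mul_pow {C R : ℝ} (hf : ∀ k, |f k| ≤ C * R ^ k)
    (r : ℝ≥0) : Integrable f Po(r) := by
  rw [ProbabilityTheory.integrable_poissonMeasure_iff]
  refine .of_nonneg_of_le (fun k ↦ by positivity)
    (fun k ↦ mul_le_mul_of_nonneg_left (hf k) (by positivity)) ?_
  refine ((summable_pow_div_factorial (r * R)).mul_left (exp (-r) * C)).congr fun k ↦ ?_
  rw [mul_pow]
  ring

lemma abs_le_mul_two_pow_of_abs_succ_sub_le {C : ℝ} (hf : ∀ k, |f (k + 1) - f k| ≤ C * 2 ^ k)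
    (k : ℕ) : |f k| ≤ (|f 0| + C) * 2 ^ k := by
  have hC : 0 ≤ C := by simpa using (abs_nonneg _).trans (hf 0)
  induction k with
  | zero => simpa using hC
  | succ k ih =>
    calc |f (k + 1)| ≤ |f k| + |f (k + 1) - f k| := by
          simpa using abs_add_le (f k) (f (k + 1) - f k)
      _ ≤ (|f 0| + C) * 2 ^ k + C * 2 ^ k := add_le_add ih (hf k)
      _ ≤ (|f 0| + C) * 2 ^ (k + 1) := by
          have : 0 ≤ |f 0| * 2 ^ k := by positivity
          rw [pow_succ]
          linarith

lemma integrable_poissonMeasure_of_abs_succ_sub_le {C : ℝ}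
    (hf : ∀ k, |f (k + 1) - f k| ≤ C * 2 ^ k) (r : ℝ≥0) : Integrable f Po(r) :=
  integrable_poissonMeasure_of_abs_le_mul_pow (abs_le_mul_two_pow_of_abs_succ_sub_le hf) r

lemma integrable_natCast_poissonMeasure (r : ℝ≥0) : Integrable (fun k : ℕ ↦ (k : ℝ)) Po(r) :=
  integrable_poissonMeasure_of_abs_succ_sub_le (C := 1)
    (fun k ↦ by simpa using one_le_pow₀ (one_le_two : (1 : ℝ) ≤ 2)) r

lemma integrable_inv_succ_poissonMeasure (r : ℝ≥0) :
    Integrable (fun k : ℕ ↦ ((k : ℝ) + 1)⁻¹) Po(r) :=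
  .of_bound .of_discrete 1 <| .of_forall fun k ↦ by
    rw [norm_of_nonneg (by positivity)]
    exact inv_le_one_of_one_le₀ (by simp)

lemma integral_comp_add_poissonMeasure {a b : ℝ≥0} (hf : Integrable f Po(a + b)) :
    ∫ x, ∫ y, f (x + y) ∂Po(b) ∂Po(a) = ∫ k, f k ∂Po(a + b) := by
  rw [← ProbabilityTheory.poissonMeasure_conv_poissonMeasure] at hf ⊢
  exact (integral_conv hf).symm

lemma integrable_integral_comp_add_poissonMeasure {a b : ℝ≥0} (hf : Integrable f Po(a + b)) :
    Integrable (fun x ↦ ∫ y, f (x + y) ∂Po(b)) Po(a) := by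
  rw [← ProbabilityTheory.poissonMeasure_conv_poissonMeasure] at hf
  exact Integrable.integral_prod_left (f := fun p : ℕ × ℕ ↦ f (p.1 + p.2))
    ((integrable_map_measure .of_discrete .of_discrete).mp hf)

/-- Every atom of a non-degenerate Poisson measure has positive mass, so an almost everywhere
statement about the first summand of a convolution holds at every `x`. -/
lemma integrable_comp_add_left_poissonMeasure {a b : ℝ≥0} (ha : 0 < a)
    (hf : Integrable f Po(a + b)) (x : ℕ) : Integrable (fun y ↦ f (x + y)) Po(b) := by
  rw [← ProbabilityTheory.poissonMeasure_conv_poissonMeasure,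
    integrable_conv_iff .of_discrete] at hf
  have hx : Po(a) {x} ≠ 0 := fun h ↦
    (ProbabilityTheory.poissonMeasure_real_singleton_pos x ha).ne' (by simp [measureReal_def, h])
  exact (ae_iff_of_countable.mp hf.1) x hx

lemma natCast_succ_mul_div_factorial_succ (k : ℕ) (a : ℝ) :
    ((k + 1 : ℕ) : ℝ) * a / (k + 1)! = a / k ! := by
  rw [Nat.factorial_succ, Nat.cast_mul, mul_div_mul_left _ _ (by positivity)]

lemma hasSum_stein_chen {r : ℝ≥0} (hf : Integrable f Po(r)) :
    HasSum (fun k : ℕ ↦ exp (-r) * r ^ k / k ! * (k * f (k - 1))) (r * ∫ k, f k ∂Po(r)) := by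
  have hsum := (ProbabilityTheory.hasSum_integral_poissonMeasure hf).mul_left (r : ℝ)
  rw [← hasSum_nat_add_iff' 1]
  simp only [Finset.range_one, Finset.sum_singleton, CharP.cast_eq_zero, zero_mul, mul_zero,
    sub_zero, Nat.add_sub_cancel]
  refine hsum.congr_fun fun k ↦ ?_
  rw [smul_eq_mul, ← natCast_succ_mul_div_factorial_succ k (exp (-r) * r ^ k)]
  ring

lemma integrable_stein_chen {r : ℝ≥0} (hf : Integrable f Po(r)) :
    Integrable (fun k : ℕ ↦ k * f (k - 1)) Po(r) := by
  rw [ProbabilityTheory.integrable_poissonMeasure_iff]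
  refine (hasSum_stein_chen hf.abs).summable.congr fun k ↦ ?_
  rw [norm_mul, norm_natCast, norm_eq_abs]

lemma integral_stein_chen {r : ℝ≥0} (hf : Integrable f Po(r)) :
    ∫ k : ℕ, k * f (k - 1) ∂Po(r) = r * ∫ k, f k ∂Po(r) := by
  rw [ProbabilityTheory.integral_poissonMeasure]
  exact (hasSum_stein_chen hf).tsum_eq

lemma integral_natCast_poissonMeasure (r : ℝ≥0) : ∫ k : ℕ, (k : ℝ) ∂Po(r) = r := by
  simpa using integral_stein_chen (f := fun _ ↦ 1) (r := r) (integrable_const _)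

lemma poissonMeasure_real_zero (r : ℝ≥0) : Po(r).real {0} = exp (-r) := by
  simp [ProbabilityTheory.poissonMeasure_real_singleton]

lemma mul_integral_inv_succ_poissonMeasure (r : ℝ≥0) :
    r * ∫ k : ℕ, ((k : ℝ) + 1)⁻¹ ∂Po(r) = 1 - exp (-r) := by
  have hcompl : (fun k : ℕ ↦ (k : ℝ) * (((k - 1 : ℕ) : ℝ) + 1)⁻¹)
      = fun k ↦ 1 - ({0} : Set ℕ).indicator 1 k := by
    funext k
    cases k with
    | zero => simp
    | succ k => simp [mul_inv_cancel₀ (Nat.cast_add_one_ne_zero k : (k : ℝ) + 1 ≠ 0)]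
  rw [← integral_stein_chen (integrable_inv_succ_poissonMeasure r), hcompl,
    integral_sub (integrable_const _)
      ((integrable_const 1).indicator (measurableSet_singleton 0)),
    integral_indicator_one (measurableSet_singleton 0), poissonMeasure_real_zero]
  simp

lemma hasDerivAt_tsum_pow_div_factorial_mul {R m : ℝ}
    (hf : Summable fun k ↦ R ^ k / k ! * |f (k + 1)|) (hm : |m| < R) :
    HasDerivAt (fun t ↦ ∑' k, t ^ k / k ! * f k) (∑' k, m ^ k / k ! * f (k + 1)) m := by
  have hR : 0 < R := (abs_nonneg m).trans_lt hm
  have hterm (k : ℕ) (t : ℝ) : HasDerivAt (fun t ↦ t ^ k / k ! * f k)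
      (k * t ^ (k - 1) / k ! * f k) t := ((hasDerivAt_pow k t).div_const _).mul_const _
  have hbound (k : ℕ) (t : ℝ) (ht : t ∈ Ioo (-R) R) :
      ‖k * t ^ (k - 1) / k ! * f k‖ ≤ k * R ^ (k - 1) / k ! * |f k| := by
    rw [norm_mul, norm_div, norm_mul, norm_pow, norm_natCast, norm_natCast]
    gcongr
    exacts [(abs_lt.mpr ht).le, le_rfl]
  have hsum : Summable fun k : ℕ ↦ k * R ^ (k - 1) / k ! * |f k| := by
    rw [← summable_nat_add_iff 1]
    refine hf.congr fun k ↦ ?_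
    rw [natCast_succ_mul_div_factorial_succ, Nat.add_sub_cancel]
  have hder := hasDerivAt_tsum_of_isPreconnected hsum isOpen_Ioo isPreconnected_Ioo
    (fun k t _ ↦ hterm k t) hbound (y₀ := 0) (by simp [hR])
    (summable_of_ne_finset_zero (s := {0}) fun k hk ↦ by
      simp [zero_pow (Finset.notMem_singleton.mp hk)]) (abs_lt.mp hm)
  refine hder.congr_deriv ?_
  rw [Summable.tsum_eq_zero_add (.of_norm_bounded hsum fun k ↦ hbound k m (abs_lt.mp hm))]
  simp only [natCast_succ_mul_div_factorial_succ, Nat.add_sub_cancel, CharP.cast_eq_zero, zero_mul,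
    zero_div, zero_add]

lemma hasDerivAt_integral_poissonMeasure (hf : ∀ r, Integrable f Po(r)) {m : ℝ} (hm : 0 < m) :
    HasDerivAt (fun t : ℝ ↦ ∫ k, f k ∂Po(t.toNNReal))
      (∫ k, (f (k + 1) - f k) ∂Po(m.toNNReal)) m := by
  have hshift (r : ℝ≥0) : Integrable (fun k ↦ f (k + 1)) Po(r) := by
    simpa only [add_comm 1] using integrable_comp_add_left_poissonMeasure one_pos (hf (1 + r)) 1
  have hm' : (m.toNNReal : ℝ) = m := coe_toNNReal m hm.le
  have hsum : Summable fun k ↦ (m + 1) ^ k / k ! * |f (k + 1)| := by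
    simpa [coe_toNNReal _ (by positivity : 0 ≤ m + 1)] using
      summable_pow_div_factorial_mul_of_integrable (hshift (m + 1).toNNReal).abs
  have hseries : (fun t : ℝ ↦ ∫ k, f k ∂Po(t.toNNReal))
      =ᶠ[𝓝 m] fun t ↦ exp (-t) * ∑' k, t ^ k / k ! * f k := by
    filter_upwards [lt_mem_nhds hm] with t ht
    rw [integral_poissonMeasure_eq_exp_mul_tsum, coe_toNNReal t ht.le]
  refine HasDerivAt.congr_of_eventuallyEq ?_ hseries
  refine ((hasDerivAt_neg m).exp.mul (hasDerivAt_tsum_pow_div_factorial_mul hsum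
    (by rw [abs_of_pos hm]; linarith))).congr_deriv ?_
  rw [integral_sub (hshift _) (hf _), integral_poissonMeasure_eq_exp_mul_tsum,
    integral_poissonMeasure_eq_exp_mul_tsum, hm']
  ring

end PoissonIntegrals

section Digamma

/-- The digamma function at the positive integers: `digammaSucc k = ψ(k + 1) = H_k - γ`. -/
noncomputable def digammaSucc (k : ℕ) : ℝ := harmonic k - eulerMascheroniConstant

/-- The second-order term of the asymptotic expansion `ψ(z + 1/2) = log z + 1 / (24 z²) + O(z⁻⁴)`
at `z = k + 1/2`; it bounds the gap `digammaSucc k - log (k + 1/2)`. -/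
noncomputable def digammaGap (k : ℕ) : ℝ := 1 / (24 * ((k : ℝ) + 1 / 2) ^ 2)

lemma digammaSucc_succ_sub (k : ℕ) : digammaSucc (k + 1) - digammaSucc k = ((k : ℝ) + 1)⁻¹ := by
  simp [digammaSucc, harmonic_succ]

lemma log_succ_div_le {a : ℝ} (ha : 0 < a) :
    log ((a + 1) / a) ≤ 1 / (a + 1 / 2) + (1 / (24 * a ^ 2) - 1 / (24 * (a + 1) ^ 2)) := by
  have hseries := log_div_le_sum_range_add (x := 1 / (2 * a + 1)) (by positivity)
    (by rw [div_lt_one (by positivity)]; linarith) 3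
  have harg : (1 + 1 / (2 * a + 1)) / (1 - 1 / (2 * a + 1)) = (a + 1) / a := by
    field_simp
    ring
  have hsq : 1 - (1 / (2 * a + 1)) ^ 2 = 4 * a * (a + 1) / (2 * a + 1) ^ 2 := by
    field_simp
    ring
  have hgap : 1 / (a + 1 / 2) + (1 / (24 * a ^ 2) - 1 / (24 * (a + 1) ^ 2))
      - 2 * (1 / (2 * a + 1) + (1 / (2 * a + 1)) ^ 3 / 3 + (1 / (2 * a + 1)) ^ 5 / 5
        + (1 / (2 * a + 1)) ^ 7 / (4 * a * (a + 1) / (2 * a + 1) ^ 2))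
      = (112 * (a * (a + 1)) ^ 2 + 5) / (120 * (a * (a + 1)) ^ 2 * (2 * a + 1) ^ 5) := by
    field_simp
    ring
  have hgap_pos :
      0 < (112 * (a * (a + 1)) ^ 2 + 5) / (120 * (a * (a + 1)) ^ 2 * (2 * a + 1) ^ 5) := by
    positivity
  simp only [harg, hsq, Finset.sum_range_succ, Finset.sum_range_zero, Nat.cast_zero, Nat.cast_one,
    Nat.cast_ofNat, Nat.reduceMul, Nat.reduceAdd, pow_one] at hseries
  linarith

lemma tendsto_digammaSucc_sub_log :
    Tendsto (fun k : ℕ ↦ digammaSucc k - log ((k : ℝ) + 1 / 2)) atTop (𝓝 0) := by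
  have hshift := (tendsto_log_comp_add_sub_log (1 / 2)).comp tendsto_natCast_atTop_atTop
  have h := (tendsto_harmonic_sub_log.sub_const eulerMascheroniConstant).sub hshift
  simp only [sub_self] at h
  refine h.congr fun k ↦ ?_
  simp only [digammaSucc, Function.comp_apply]
  ring

lemma tendsto_digammaGap : Tendsto digammaGap atTop (𝓝 0) := by
  unfold digammaGap
  refine tendsto_const_nhds.div_atTop (.const_mul_atTop (by norm_num) ?_)
  exact (tendsto_pow_atTop two_ne_zero).comp
    (tendsto_atTop_add_const_right _ _ tendsto_natCast_atTop_atTop)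

lemma digammaSucc_le_log_add_digammaGap (k : ℕ) :
    digammaSucc k ≤ log ((k : ℝ) + 1 / 2) + digammaGap k := by
  have hmono : Monotone fun k : ℕ ↦ digammaSucc k - log ((k : ℝ) + 1 / 2) - digammaGap k := by
    refine monotone_nat_of_le_succ fun k ↦ ?_
    have hlog := log_succ_div_le (a := (k : ℝ) + 1 / 2) (by positivity)
    rw [log_div (by positivity) (by positivity)] at hlog
    have hshift : (k : ℝ) + 1 / 2 + 1 = ((k + 1 : ℕ) : ℝ) + 1 / 2 := by
      push_cast
      ring
    have hhalf : (k : ℝ) + 1 / 2 + 1 / 2 = k + 1 := by ring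
    rw [hshift, hhalf, one_div ((k : ℝ) + 1), ← digammaSucc_succ_sub] at hlog
    simp only [digammaGap]
    linarith
  have h := hmono.ge_of_tendsto
    (by simpa using tendsto_digammaSucc_sub_log.sub tendsto_digammaGap) k
  linarith

lemma log_succ_sub_inv_lt_digammaSucc (k : ℕ) :
    log ((k : ℝ) + 1) - ((k : ℝ) + 1)⁻¹ < digammaSucc k := by
  have h := eulerMascheroniConstant_lt_eulerMascheroniSeq' (k + 1)
  simp only [eulerMascheroniSeq', harmonic_succ, Nat.add_eq_zero_iff, one_ne_zero, and_false,
    if_false] at h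
  push_cast at h
  rw [digammaSucc]
  linarith

lemma integrable_digammaSucc (r : ℝ≥0) : Integrable digammaSucc Po(r) := by
  refine integrable_poissonMeasure_of_abs_succ_sub_le (C := 1) (fun k ↦ ?_) r
  rw [digammaSucc_succ_sub, abs_of_nonneg (by positivity), one_mul]
  exact (inv_le_one_of_one_le₀ (by simp)).trans (one_le_pow₀ one_le_two)

lemma log_sub_inv_le_integral_digammaSucc {m : ℝ} (hm : 0 < m) :
    log m - m⁻¹ ≤ ∫ k, digammaSucc k ∂Po(m.toNNReal) := by
  have hpoint (k : ℕ) : log m + 1 - (m + 1) * ((k : ℝ) + 1)⁻¹ ≤ digammaSucc k := by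
    have hlog := one_sub_inv_le_log_of_pos (x := ((k : ℝ) + 1) / m) (by positivity)
    rw [log_div (by positivity) hm.ne', inv_div, div_eq_mul_inv] at hlog
    linarith [log_succ_sub_inv_lt_digammaSucc k]
  have hint := (integrable_inv_succ_poissonMeasure m.toNNReal).const_mul (m + 1)
  have hmean := mul_integral_inv_succ_poissonMeasure m.toNNReal
  rw [coe_toNNReal m hm.le] at hmean
  calc log m - m⁻¹
      ≤ log m + 1 - (m + 1) * ((1 - exp (-m)) / m) := by
        have : 0 ≤ (m + 1) * exp (-m) / m := by positivity
        have h : (m + 1) * ((1 - exp (-m)) / m) = 1 + m⁻¹ - (m + 1) * exp (-m) / m := by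
          field_simp
        linarith
    _ = ∫ k : ℕ, (log m + 1 - (m + 1) * ((k : ℝ) + 1)⁻¹) ∂Po(m.toNNReal) := by
        rw [integral_sub (integrable_const _) hint, integral_const_mul, ← hmean,
          mul_div_cancel_left₀ _ hm.ne']
        simp
    _ ≤ ∫ k, digammaSucc k ∂Po(m.toNNReal) :=
        integral_mono ((integrable_const _).sub hint) (integrable_digammaSucc _) hpoint

lemma hasDerivAt_integral_digammaSucc {m : ℝ} (hm : 0 < m) :
    HasDerivAt (fun t : ℝ ↦ ∫ k, digammaSucc k ∂Po(t.toNNReal)) ((1 - exp (-m)) / m) m := by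
  refine (hasDerivAt_integral_poissonMeasure integrable_digammaSucc hm).congr_deriv ?_
  simp_rw [digammaSucc_succ_sub]
  rw [eq_div_iff hm.ne', mul_comm]
  simpa [hm.le] using mul_integral_inv_succ_poissonMeasure m.toNNReal

lemma antitoneOn_integral_digammaSucc_sub : AntitoneOn
    (fun m : ℝ ↦ ∫ k, digammaSucc k ∂Po(m.toNNReal) - (log m + exp (-m) / (m + 1))) (Ioi 0) := by
  have hderiv (m : ℝ) (hm : 0 < m) : HasDerivAt
      (fun m : ℝ ↦ ∫ k, digammaSucc k ∂Po(m.toNNReal) - (log m + exp (-m) / (m + 1)))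
      (-(exp (-m) / (m * (m + 1) ^ 2))) m := by
    refine ((hasDerivAt_integral_digammaSucc hm).sub ((hasDerivAt_log hm.ne').add
      ((hasDerivAt_neg m).exp.div ((hasDerivAt_id m).add_const 1)
        (add_pos hm one_pos).ne'))).congr_deriv ?_
    simp only [id]
    field_simp
    ring
  refine antitoneOn_of_hasDerivWithinAt_nonpos (convex_Ioi 0)
    (fun m hm ↦ (hderiv m hm).continuousAt.continuousWithinAt)
    (fun m hm ↦ (hderiv m (interior_subset hm)).hasDerivWithinAt) fun m hm ↦ ?_
  have hm : 0 < m := interior_subset hm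
  rw [neg_nonpos]
  positivity

lemma log_add_exp_neg_div_le_integral_digammaSucc {m : ℝ} (hm : 0 < m) :
    log m + exp (-m) / (m + 1) ≤ ∫ k, digammaSucc k ∂Po(m.toNNReal) := by
  have hlower : ∀ᶠ M : ℝ in atTop, -(2 * M⁻¹)
      ≤ ∫ k, digammaSucc k ∂Po(m.toNNReal) - (log m + exp (-m) / (m + 1)) := by
    filter_upwards [eventually_ge_atTop m] with M hM
    have hM_pos : 0 < M := hm.trans_le hM
    have hexp : exp (-M) / (M + 1) ≤ M⁻¹ := by
      rw [← one_div]
      gcongr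
      · exact exp_le_one_iff.mpr (by linarith)
      · linarith
    linarith [antitoneOn_integral_digammaSucc_sub hm hM_pos hM,
      log_sub_inv_le_integral_digammaSucc hM_pos]
  have hlim : Tendsto (fun M : ℝ ↦ -(2 * M⁻¹)) atTop (𝓝 0) := by
    simpa using (tendsto_inv_atTop_zero.const_mul (2 : ℝ)).neg
  exact sub_nonneg.mp (le_of_tendsto hlim hlower)

end Digamma

section LogMoment

lemma integrable_digammaGap (r : ℝ≥0) : Integrable digammaGap Po(r) :=
  .of_bound .of_discrete (1 / 6) <| .of_forall fun k ↦ by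
    rw [digammaGap, norm_of_nonneg (by positivity)]
    gcongr
    nlinarith [(k.cast_nonneg : (0 : ℝ) ≤ k)]

lemma mul_digammaGap_pred_le {k : ℕ} (hk : 3 ≤ k) : k * digammaGap (k - 1) ≤ 0.02 := by
  obtain ⟨j, rfl⟩ := Nat.exists_eq_add_of_le' hk
  rw [Nat.add_sub_assoc (by norm_num), digammaGap, mul_one_div, div_le_iff₀ (by positivity)]
  push_cast
  nlinarith [(j.cast_nonneg : (0 : ℝ) ≤ j)]

/-- The left-hand side collects the terms `k < 5` of the mean of `0.02 - k * digammaGap (k - 1)`;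
the term `k = 3` vanishes and all later ones are nonnegative. -/
lemma exp_mul_le_sub_mul_integral_digammaGap (r : ℝ≥0) :
    exp (-r) * (0.02 + (0.02 - 1 / 6) * r + (0.02 - 1 / 27) / 2 * r ^ 2
        + (0.02 - 2 / 147) / 24 * r ^ 4)
      ≤ 0.02 - r * ∫ k, digammaGap k ∂Po(r) := by
  have hgap := integrable_stein_chen (integrable_digammaGap r)
  have hsum := ProbabilityTheory.hasSum_integral_poissonMeasure
    ((integrable_const (0.02 : ℝ)).sub hgap)
  have hpartial := sum_le_hasSum (Finset.range 5) (fun k hk ↦ ?_) hsum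
  · rw [integral_sub' (integrable_const (0.02 : ℝ)) hgap, integral_const, probReal_univ,
      one_smul, integral_stein_chen (integrable_digammaGap r)] at hpartial
    refine hpartial.trans_eq' ?_
    simp only [Finset.sum_range_succ, Finset.sum_range_zero, digammaGap, Nat.factorial, smul_eq_mul,
      Pi.sub_apply]
    push_cast
    ring
  · have hk : 3 ≤ k := by
      simp only [Finset.mem_range] at hk
      omega
    exact smul_nonneg (by positivity) (sub_nonneg.mpr (mul_digammaGap_pred_le hk))

lemma quartic_add_div_succ_pos {m : ℝ} (hm : 0 < m) :
    0 < 0.02 + (0.02 - 1 / 6) * m + (0.02 - 1 / 27) / 2 * m ^ 2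
      + (0.02 - 2 / 147) / 24 * m ^ 4 + m / (m + 1) := by
  have hquartic : 0 < 131 / 150 - 419 / 2700 * m - 23 / 2700 * m ^ 2
      + 47 / 176400 * (m ^ 3 + m ^ 4) := by
    nlinarith [sq_nonneg (m ^ 2 + m / 2 - 37), sq_nonneg (m - 63 / 10)]
  calc 0 < (0.02 + m * (131 / 150 - 419 / 2700 * m - 23 / 2700 * m ^ 2
        + 47 / 176400 * (m ^ 3 + m ^ 4))) / (m + 1) := by positivity
    _ = _ := by
      field_simp
      ring

lemma mul_integral_digammaGap_lt {m : ℝ} (hm : 0 < m) :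
    m * ∫ k, digammaGap k ∂Po(m.toNNReal) < 0.02 + m * (exp (-m) / (m + 1)) := by
  have hle := exp_mul_le_sub_mul_integral_digammaGap m.toNNReal
  rw [coe_toNNReal m hm.le] at hle
  have hpos := mul_pos (exp_pos (-m)) (quartic_add_div_succ_pos hm)
  rw [mul_add, mul_div_left_comm] at hpos
  linarith

lemma abs_log_add_half_succ_sub_le (k : ℕ) :
    |log (((k + 1 : ℕ) : ℝ) + 1 / 2) - log ((k : ℝ) + 1 / 2)| ≤ 2 * 2 ^ k := by
  have hk : (0 : ℝ) < k + 1 / 2 := by positivity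
  have hmono : log ((k : ℝ) + 1 / 2) ≤ log (((k + 1 : ℕ) : ℝ) + 1 / 2) :=
    log_le_log hk (by push_cast; linarith)
  have hratio : (((k + 1 : ℕ) : ℝ) + 1 / 2) / (k + 1 / 2) ≤ 3 := by
    rw [div_le_iff₀ hk]
    push_cast
    linarith [(k.cast_nonneg : (0 : ℝ) ≤ k)]
  have hlog := log_le_sub_one_of_pos
    (x := (((k + 1 : ℕ) : ℝ) + 1 / 2) / (k + 1 / 2)) (by positivity)
  rw [log_div (by positivity) hk.ne'] at hlog
  rw [abs_of_nonneg (sub_nonneg.mpr hmono)]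
  linarith [one_le_pow₀ (n := k) (one_le_two : (1 : ℝ) ≤ 2)]

lemma integrable_log_add_half (r : ℝ≥0) :
    Integrable (fun k : ℕ ↦ log ((k : ℝ) + 1 / 2)) Po(r) :=
  integrable_poissonMeasure_of_abs_succ_sub_le abs_log_add_half_succ_sub_le r

lemma log_sub_integral_log_add_half_lt {m : ℝ} (hm : 0 < m) :
    log m - ∫ k : ℕ, log ((k : ℝ) + 1 / 2) ∂Po(m.toNNReal) < 0.02 / m := by
  have hlog := integrable_log_add_half m.toNNReal
  have hgap := integrable_digammaGap m.toNNReal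
  have hdigamma := integral_mono (integrable_digammaSucc m.toNNReal) (hlog.add hgap)
    digammaSucc_le_log_add_digammaGap
  rw [integral_add' hlog hgap] at hdigamma
  calc log m - ∫ k : ℕ, log ((k : ℝ) + 1 / 2) ∂Po(m.toNNReal)
      ≤ ∫ k, digammaGap k ∂Po(m.toNNReal) - exp (-m) / (m + 1) := by
        linarith [log_add_exp_neg_div_le_integral_digammaSucc hm]
    _ < 0.02 / m := by
        rw [lt_div_iff₀' hm, mul_sub]
        linarith [mul_integral_digammaGap_lt hm]

end LogMoment

section JeffreysPosterior

/-- Under the Jeffreys prior, the posterior of a Poisson mean given the count `k` is the Gamma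
distribution of shape `k + 1/2` and rate `1`. This is the logarithm of its density at `m`, taken
with respect to `dm / m` so that rescaling the mean does not change it. -/
noncomputable def jeffreysLogPosterior (m : ℝ) (k : ℕ) : ℝ :=
  ((k : ℝ) + 1 / 2) * log m - m - log (Gamma ((k : ℝ) + 1 / 2))

/-- The mean of `jeffreysLogPosterior m` at the true parameter, that is, under a Poisson count of
mean `m`. -/
noncomputable def expectedLogPosterior (m : ℝ) : ℝ :=
  ∫ k, jeffreysLogPosterior m k ∂Po(m.toNNReal)

lemma log_Gamma_succ_add_half_sub (k : ℕ) :
    log (Gamma (((k + 1 : ℕ) : ℝ) + 1 / 2)) - log (Gamma ((k : ℝ) + 1 / 2))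
      = log ((k : ℝ) + 1 / 2) := by
  have hk : (0 : ℝ) < k + 1 / 2 := by positivity
  rw [Nat.cast_succ, add_right_comm, Gamma_add_one hk.ne', log_mul hk.ne' (Gamma_pos_of_pos hk).ne',
    add_sub_cancel_right]

lemma integrable_log_Gamma_add_half (r : ℝ≥0) :
    Integrable (fun k : ℕ ↦ log (Gamma ((k : ℝ) + 1 / 2))) Po(r) := by
  refine integrable_poissonMeasure_of_abs_succ_sub_le
    (C := |log (((0 : ℕ) : ℝ) + 1 / 2)| + 2) (fun k ↦ ?_) r
  rw [log_Gamma_succ_add_half_sub]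
  exact abs_le_mul_two_pow_of_abs_succ_sub_le (f := fun k ↦ log ((k : ℝ) + 1 / 2))
    abs_log_add_half_succ_sub_le k

lemma integrable_add_half_mul_log_sub (m : ℝ) (r : ℝ≥0) :
    Integrable (fun k : ℕ ↦ ((k : ℝ) + 1 / 2) * log m - m) Po(r) :=
  (((integrable_natCast_poissonMeasure r).add (integrable_const _)).mul_const _).sub
    (integrable_const _)

lemma integrable_jeffreysLogPosterior (m : ℝ) (r : ℝ≥0) :
    Integrable (jeffreysLogPosterior m) Po(r) :=
  (integrable_add_half_mul_log_sub m r).sub (integrable_log_Gamma_add_half r)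

lemma expectedLogPosterior_eq {m : ℝ} (hm : 0 ≤ m) :
    expectedLogPosterior m = (m + 1 / 2) * log m - m
      - ∫ k : ℕ, log (Gamma ((k : ℝ) + 1 / 2)) ∂Po(m.toNNReal) := by
  have hmean := integrable_natCast_poissonMeasure m.toNNReal
  have hadd : Integrable (fun k : ℕ ↦ (k : ℝ) + 1 / 2) Po(m.toNNReal) :=
    hmean.add (integrable_const _)
  unfold expectedLogPosterior jeffreysLogPosterior
  rw [integral_sub (integrable_add_half_mul_log_sub m _) (integrable_log_Gamma_add_half _),
    integral_sub (hadd.mul_const _) (integrable_const _), integral_mul_const,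
    integral_add hmean (integrable_const _), integral_natCast_poissonMeasure, coe_toNNReal m hm,
    integral_const, integral_const, probReal_univ, one_smul, one_smul]

lemma hasDerivAt_expectedLogPosterior {m : ℝ} (hm : 0 < m) :
    HasDerivAt expectedLogPosterior
      (log m - ∫ k : ℕ, log ((k : ℝ) + 1 / 2) ∂Po(m.toNNReal) + 1 / (2 * m)) m := by
  have heq : expectedLogPosterior =ᶠ[𝓝 m] fun t ↦ (t + 1 / 2) * log t - t
      - ∫ k : ℕ, log (Gamma ((k : ℝ) + 1 / 2)) ∂Po(t.toNNReal) := by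
    filter_upwards [lt_mem_nhds hm] with t ht using expectedLogPosterior_eq ht.le
  have hGamma := hasDerivAt_integral_poissonMeasure integrable_log_Gamma_add_half hm
  simp_rw [log_Gamma_succ_add_half_sub] at hGamma
  refine HasDerivAt.congr_of_eventuallyEq ?_ heq
  refine (((((hasDerivAt_id m).add_const _).mul (hasDerivAt_log hm.ne')).sub
    (hasDerivAt_id m)).sub hGamma).congr_deriv ?_
  simp only [id]
  field_simp
  ring

lemma strictAntiOn_expectedLogPosterior_sub_log :
    StrictAntiOn (fun m ↦ expectedLogPosterior m - 0.52 * log m) (Ioi 0) := by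
  have hderiv (m : ℝ) (hm : 0 < m) : HasDerivAt (fun m ↦ expectedLogPosterior m - 0.52 * log m)
      (log m - ∫ k : ℕ, log ((k : ℝ) + 1 / 2) ∂Po(m.toNNReal) + 1 / (2 * m) - 0.52 * m⁻¹) m :=
    (hasDerivAt_expectedLogPosterior hm).sub ((hasDerivAt_log hm.ne').const_mul 0.52)
  refine strictAntiOn_of_deriv_neg (convex_Ioi 0)
    (fun m hm ↦ (hderiv m hm).continuousAt.continuousWithinAt) fun m hm ↦ ?_
  rw [interior_Ioi, mem_Ioi] at hm
  rw [(hderiv m hm).deriv]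
  have hsplit : 0.02 / m + 1 / (2 * m) - 0.52 * m⁻¹ = 0 := by
    field_simp
    norm_num
  linarith [log_sub_integral_log_add_half_lt hm]

lemma expectedLogPosterior_sub_lt {a b : ℝ} (ha : 0 < a) (hab : a < b) :
    expectedLogPosterior b - expectedLogPosterior a < 0.52 * log (b / a) := by
  have h := strictAntiOn_expectedLogPosterior_sub_log ha (ha.trans hab) hab
  simp only at h
  rw [log_div (ha.trans hab).ne' ha.ne']
  linarith

end JeffreysPosterior

section Risk

variable {d : ℕ} {r s : ℝ} {lam : Fin d → ℝ}

lemma poissonPMF_eq_prod_real (hr : 0 ≤ r) (hlam : ∀ i, 0 ≤ lam i) (x : Fin d → ℕ) :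
    poissonPMF d r lam x = ∏ i, Po((r * lam i).toNNReal).real {x i} := by
  refine Finset.prod_congr rfl fun i _ ↦ ?_
  rw [ProbabilityTheory.poissonMeasure_real_singleton,
    coe_toNNReal _ (mul_nonneg hr (hlam i))]

lemma tsum_poissonPMF_mul_sum {f : Fin d → ℕ → ℝ} (hr : 0 ≤ r) (hlam : ∀ i, 0 ≤ lam i)
    (hf : ∀ i, Integrable (f i) Po((r * lam i).toNNReal)) :
    ∑' x, poissonPMF d r lam x * ∑ i, f i (x i)
      = ∑ i, ∫ k, f i k ∂Po((r * lam i).toNNReal) := by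
  simp_rw [poissonPMF_eq_prod_real hr hlam, tsum_prod_real_mul_sum hf]

lemma tsum_poissonPMF_mul_tsum_poissonPMF_mul_sum {f g : Fin d → ℕ → ℝ} (hr : 0 < r)
    (hs : 0 ≤ s) (hlam : ∀ i, 0 < lam i)
    (hf : ∀ i, Integrable (f i) Po(((r + s) * lam i).toNNReal))
    (hg : ∀ i, Integrable (g i) Po((r * lam i).toNNReal)) :
    ∑' x, poissonPMF d r lam x *
        ∑' y, poissonPMF d s lam y * ∑ i, (f i (x i + y i) - g i (x i))
      = ∑ i, (∫ k, f i k ∂Po(((r + s) * lam i).toNNReal)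
          - ∫ k, g i k ∂Po((r * lam i).toNNReal)) := by
  have hrate (i : Fin d) :
      ((r + s) * lam i).toNNReal = (r * lam i).toNNReal + (s * lam i).toNNReal := by
    rw [add_mul, toNNReal_add (mul_nonneg hr.le (hlam i).le) (mul_nonneg hs (hlam i).le)]
  simp_rw [hrate] at hf ⊢
  have hcond (i : Fin d) (k : ℕ) : Integrable (fun y ↦ f i (k + y)) Po((s * lam i).toNNReal) :=
    integrable_comp_add_left_poissonMeasure (toNNReal_pos.mpr (mul_pos hr (hlam i))) (hf i) k
  have hinner (x : Fin d → ℕ) :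
      ∑' y, poissonPMF d s lam y * ∑ i, (f i (x i + y i) - g i (x i))
        = ∑ i, (∫ y, f i (x i + y) ∂Po((s * lam i).toNNReal) - g i (x i)) := by
    rw [tsum_poissonPMF_mul_sum (f := fun i y ↦ f i (x i + y) - g i (x i)) hs
      (fun i ↦ (hlam i).le) fun i ↦ (hcond i (x i)).sub (integrable_const _)]
    refine Finset.sum_congr rfl fun i _ ↦ ?_
    rw [integral_sub (hcond i (x i)) (integrable_const _), integral_const, probReal_univ, one_smul]
  have hmean (i : Fin d) := integrable_integral_comp_add_poissonMeasure (hf i)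
  simp_rw [hinner]
  rw [tsum_poissonPMF_mul_sum
    (f := fun i k ↦ ∫ y, f i (k + y) ∂Po((s * lam i).toNNReal) - g i k) hr.le
    (fun i ↦ (hlam i).le) fun i ↦ (hmean i).sub (hg i)]
  refine Finset.sum_congr rfl fun i _ ↦ ?_
  rw [integral_sub (hmean i) (hg i), integral_comp_add_poissonMeasure (hf i)]

/-- The negative binomial predictive probability of the count `y` given the count `x`, which is the
one-dimensional case of `pJ`. -/
noncomputable def jeffreysPredictive (r s : ℝ) (x y : ℕ) : ℝ :=
  (r / (r + s)) ^ ((x : ℝ) + 1 / 2) * (s / (r + s)) ^ y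
    * (Gamma ((x : ℝ) + y + 1 / 2) / (Gamma ((x : ℝ) + 1 / 2) * y !))

lemma pJ_eq_prod_jeffreysPredictive (hr : 0 < r) (hs : 0 < s) (x y : Fin d → ℕ) :
    pJ d r s x y = ∏ i, jeffreysPredictive r s (x i) (y i) := by
  have hexp : ∑ i, (x i : ℝ) + d / 2 = ∑ i, ((x i : ℝ) + 1 / 2) := by
    simp [Finset.sum_add_distrib, div_eq_mul_inv]
  simp only [pJ, jeffreysPredictive, Finset.prod_mul_distrib]
  rw [hexp, rpow_sum_of_pos (by positivity), Finset.prod_pow_eq_pow_sum]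

lemma jeffreysPredictive_pos (hr : 0 < r) (hs : 0 < s) (x y : ℕ) :
    0 < jeffreysPredictive r s x y := by
  have := Gamma_pos_of_pos (by positivity : (0 : ℝ) < x + 1 / 2)
  have := Gamma_pos_of_pos (by positivity : (0 : ℝ) < x + y + 1 / 2)
  unfold jeffreysPredictive
  positivity

/-- Bayes' rule: the likelihood ratio of the future count is the ratio of the posterior given both
counts to the posterior given the observed one. -/
lemma log_poisson_div_jeffreysPredictive (hr : 0 < r) (hs : 0 < s) {l : ℝ} (hl : 0 < l)
    (x y : ℕ) :
    log (exp (-(s * l)) * (s * l) ^ y / y ! / jeffreysPredictive r s x y)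
      = jeffreysLogPosterior ((r + s) * l) (x + y) - jeffreysLogPosterior (r * l) x := by
  have hx := (Gamma_pos_of_pos (by positivity : (0 : ℝ) < x + 1 / 2)).ne'
  have hxy := (Gamma_pos_of_pos (by positivity : (0 : ℝ) < x + y + 1 / 2)).ne'
  have hrs : 0 < r + s := by positivity
  have hpmf : log (exp (-(s * l)) * (s * l) ^ y / y !)
      = -(s * l) + y * (log s + log l) - log y ! := by
    rw [log_div (by positivity) (by positivity), log_mul (by positivity) (by positivity), log_exp,
      log_pow, log_mul hs.ne' hl.ne']
  have hpred : log (jeffreysPredictive r s x y)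
      = ((x : ℝ) + 1 / 2) * (log r - log (r + s)) + y * (log s - log (r + s))
        + (log (Gamma (x + y + 1 / 2)) - (log (Gamma (x + 1 / 2)) + log y !)) := by
    rw [jeffreysPredictive, log_mul (by positivity) (by positivity),
      log_mul (by positivity) (by positivity), log_rpow (by positivity), log_pow,
      log_div hr.ne' hrs.ne', log_div hs.ne' hrs.ne', log_div hxy (by positivity),
      log_mul hx (by positivity)]
  rw [log_div (by positivity) (jeffreysPredictive_pos hr hs x y).ne', hpmf, hpred,
    jeffreysLogPosterior, jeffreysLogPosterior, log_mul hrs.ne' hl.ne', log_mul hr.ne' hl.ne']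
  push_cast
  ring

lemma log_poissonPMF_div_pJ (hr : 0 < r) (hs : 0 < s) (hlam : ∀ i, 0 < lam i)
    (x y : Fin d → ℕ) :
    log (poissonPMF d s lam y / pJ d r s x y)
      = ∑ i, (jeffreysLogPosterior ((r + s) * lam i) (x i + y i)
          - jeffreysLogPosterior (r * lam i) (x i)) := by
  have hne (i : Fin d) : exp (-(s * lam i)) * (s * lam i) ^ y i / (y i)!
      / jeffreysPredictive r s (x i) (y i) ≠ 0 := by
    have := jeffreysPredictive_pos hr hs (x i) (y i)
    have := hlam i
    positivity
  rw [poissonPMF, pJ_eq_prod_jeffreysPredictive hr hs, ← Finset.prod_div_distrib,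
    log_prod fun i _ ↦ hne i]
  exact Finset.sum_congr rfl fun i _ ↦
    log_poisson_div_jeffreysPredictive hr hs (hlam i) (x i) (y i)

lemma klRisk_pJ_eq_sum_expectedLogPosterior_sub (hr : 0 < r) (hs : 0 < s)
    (hlam : ∀ i, 0 < lam i) :
    klRisk d r s lam (fun x y ↦ pJ d r s x y)
      = ∑ i, (expectedLogPosterior ((r + s) * lam i) - expectedLogPosterior (r * lam i)) := by
  simp_rw [klRisk, log_poissonPMF_div_pJ hr hs hlam]
  exact tsum_poissonPMF_mul_tsum_poissonPMF_mul_sum hr hs.le hlam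
    (f := fun i ↦ jeffreysLogPosterior ((r + s) * lam i))
    (g := fun i ↦ jeffreysLogPosterior (r * lam i))
    (fun i ↦ integrable_jeffreysLogPosterior _ _) fun i ↦ integrable_jeffreysLogPosterior _ _

end Risk

theorem stmt_2 (d : ℕ) (hd : 1 ≤ d) (r s : ℝ) (hr : 0 < r) (hs : 0 < s)
    (lam : Fin d → ℝ) (hlam : ∀ i, 0 < lam i) :
    klRisk d r s lam (fun x y => pJ d r s x y)
      < 0.52 * (d : ℝ) * Real.log ((r + s) / r) := by
  have : NeZero d := ⟨by omega⟩
  have hcoord (i : Fin d) : expectedLogPosterior ((r + s) * lam i)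
      - expectedLogPosterior (r * lam i) < 0.52 * log ((r + s) / r) := by
    have h := expectedLogPosterior_sub_lt (mul_pos hr (hlam i))
      (mul_lt_mul_of_pos_right (lt_add_of_pos_right r hs) (hlam i))
    rwa [mul_div_mul_right _ _ (hlam i).ne'] at h
  calc klRisk d r s lam (fun x y ↦ pJ d r s x y)
      = ∑ i, (expectedLogPosterior ((r + s) * lam i) - expectedLogPosterior (r * lam i)) :=
        klRisk_pJ_eq_sum_expectedLogPosterior_sub hr hs hlam
    _ < ∑ _i : Fin d, 0.52 * log ((r + s) / r) :=
        Finset.sum_lt_sum_of_nonempty Finset.univ_nonempty fun i _ ↦ hcoord i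
    _ = 0.52 * (d : ℝ) * log ((r + s) / r) := by
        rw [Fin.sum_const, nsmul_eq_mul]
        ring
end

section
/- For every real λ > 0, f(λ) > −0.02, where f(λ) = λ · Σ_{x=0}^∞ log((x+1/2)/λ) · e^{-λ}λ^x/x!. -/
noncomputable def f (lam : ℝ) : ℝ :=
  lam * ∑' x : ℕ, Real.log (((x : ℝ) + 1 / 2) / lam) * Real.exp (-lam) * lam ^ x / (Nat.factorial x : ℝ)

/-!
For a Poisson variable `X` of mean `r`, `d/dr E a(X) = E (a(X + 1) - a(X))`. Hence the harmonic
numbers have an explicit derivative of their mean, `d/dr E H_X = E 1/(X + 1) = (1 - e^{-r}) / r`,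
and `E H_X - log r - e^{-r} / (r + 1)` decreases to the Euler-Mascheroni constant `γ`. On the other
hand `H_n ≤ γ + log (n + 1/2) + 1 / (24 (n + 1/2)^2)`. Taking expectations bounds
`E log (X + 1/2) - log r` below by `e^{-r} / (r + 1)` minus the mean of the correction term, which
is replaced by a slightly larger function of `X` with an elementary mean.
-/

open Filter Finset Real
open scoped Nat Topology

/-- `HasPoissonMean a r m` says that the series defining the expectation of `a X`, for `X` a Poisson
variable of mean `r`, converges to `m`. The rate `r` is any real number, so that the expectation can
be differentiated in `r` without boundary conditions. -/
def HasPoissonMean (a : ℕ → ℝ) (r m : ℝ) : Prop :=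
  HasSum (fun n : ℕ => exp (-r) * r ^ n / n ! * a n) m

section PoissonMean

variable {a b : ℕ → ℝ} {r m m' : ℝ}

theorem hasPoissonMean_iff :
    HasPoissonMean a r m ↔ HasSum (fun n : ℕ => r ^ n / n ! * a n) (exp r * m) := by
  rw [HasPoissonMean, ← hasSum_mul_left_iff (exp_ne_zero r)]
  refine iff_of_eq (congrArg (HasSum · _) (funext fun n => ?_))
  rw [exp_neg]
  field_simp

namespace HasPoissonMean

theorem add (ha : HasPoissonMean a r m) (hb : HasPoissonMean b r m') :
    HasPoissonMean (fun n => a n + b n) r (m + m') := by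
  simpa only [HasPoissonMean, mul_add] using HasSum.add ha hb

theorem sub (ha : HasPoissonMean a r m) (hb : HasPoissonMean b r m') :
    HasPoissonMean (fun n => a n - b n) r (m - m') := by
  simpa only [HasPoissonMean, mul_sub] using HasSum.sub ha hb

theorem const_mul (c : ℝ) (ha : HasPoissonMean a r m) :
    HasPoissonMean (fun n => c * a n) r (c * m) := by
  simpa only [HasPoissonMean, mul_left_comm] using HasSum.mul_left c ha

theorem mono (hr : 0 ≤ r) (ha : HasPoissonMean a r m) (hb : HasPoissonMean b r m')
    (hab : ∀ n, a n ≤ b n) : m ≤ m' :=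
  hasSum_le (fun n => mul_le_mul_of_nonneg_left (hab n) (by positivity)) ha hb

end HasPoissonMean

theorem hasPoissonMean_const (c r : ℝ) : HasPoissonMean (fun _ => c) r c := by
  rw [hasPoissonMean_iff, exp_eq_exp_ℝ]
  exact (NormedSpace.expSeries_div_hasSum_exp r).mul_right c

theorem hasPoissonMean_single (k : ℕ) (c r : ℝ) :
    HasPoissonMean (Pi.single k c : ℕ → ℝ) r (exp (-r) * r ^ k / k ! * c) := by
  have := hasSum_single (f := fun n : ℕ => exp (-r) * r ^ n / n ! * (Pi.single k c : ℕ → ℝ) n) k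
    fun n hn => by rw [Pi.single_eq_of_ne hn, mul_zero]
  rwa [Pi.single_eq_same] at this

theorem hasPoissonMean_factorial_div_factorial_add (k : ℕ) (hr : r ≠ 0) :
    HasPoissonMean (fun n => n ! / (n + k)!) r
      ((1 - exp (-r) * ∑ i ∈ range k, r ^ i / i !) / r ^ k) := by
  have exp_tail : HasSum (fun n : ℕ => r ^ (n + k) / (n + k)!)
      (exp r - ∑ i ∈ range k, r ^ i / i !) := by
    rw [hasSum_nat_add_iff' (f := fun n : ℕ => r ^ n / n !), exp_eq_exp_ℝ]
    exact NormedSpace.expSeries_div_hasSum_exp r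
  rw [hasPoissonMean_iff]
  convert! exp_tail.div_const (r ^ k) using 1
  · funext n
    rw [pow_add]
    field_simp
  · rw [exp_neg]
    field_simp

theorem hasPoissonMean_inv_add_one (hr : r ≠ 0) :
    HasPoissonMean (fun n => ((n : ℝ) + 1)⁻¹) r ((1 - exp (-r)) / r) := by
  convert hasPoissonMean_factorial_div_factorial_add 1 hr using 1
  · funext n
    rw [Nat.factorial_succ]
    push_cast
    field_simp
  · simp

theorem hasPoissonMean_inv_add_one_mul_add_two (hr : r ≠ 0) :
    HasPoissonMean (fun n => (((n : ℝ) + 1) * (n + 2))⁻¹) r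
      ((1 - exp (-r) * (1 + r)) / r ^ 2) := by
  convert hasPoissonMean_factorial_div_factorial_add 2 hr using 1
  · funext n
    rw [Nat.factorial_succ, Nat.factorial_succ]
    push_cast
    field_simp
    ring
  · simp [sum_range_succ]

theorem exists_hasPoissonMean_of_abs_le_geometric {C q : ℝ} (ha : ∀ n, |a n| ≤ C * q ^ n) (r : ℝ) :
    ∃ m, HasPoissonMean a r m := by
  refine Summable.of_norm_bounded
    (g := fun n : ℕ => exp (-r) * C * ((|r| * q) ^ n / n !))
    ((Real.summable_pow_div_factorial (|r| * q)).mul_left _) fun n => ?_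
  calc ‖exp (-r) * r ^ n / n ! * a n‖ = exp (-r) * |r| ^ n / n ! * |a n| := by
        simp
    _ ≤ exp (-r) * |r| ^ n / n ! * (C * q ^ n) := by
        gcongr
        exact ha n
    _ = exp (-r) * C * ((|r| * q) ^ n / n !) := by
        rw [mul_pow]
        ring

theorem hasDerivAt_of_hasSum_pow_div_factorial {A : ℝ → ℝ} {A' : ℝ}
    (hA : ∀ s, HasSum (fun n : ℕ => s ^ n / n ! * a n) (A s))
    (hA' : HasSum (fun n : ℕ => r ^ n / n ! * a (n + 1)) A') : HasDerivAt A A' r := by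
  set R : ℝ := |r| + 1 with hR
  have one_le_R : 1 ≤ R := by linarith [abs_nonneg r]
  have r_mem : r ∈ Metric.ball (0 : ℝ) R := by simp [hR]
  have majorant : Summable fun n : ℕ => (2 * R) ^ n / n ! * |a n| := by
    refine (hA (2 * R)).summable.abs.congr fun n => ?_
    rw [abs_mul, abs_of_nonneg (by positivity)]
  have deriv_le (n : ℕ) (y : ℝ) (hy : y ∈ Metric.ball (0 : ℝ) R) :
      ‖n * y ^ (n - 1) / n ! * a n‖ ≤ (2 * R) ^ n / n ! * |a n| := by
    have abs_y_le : |y| ≤ R := by simpa using (mem_ball_zero_iff.mp hy).le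
    have pow_le : |y| ^ (n - 1) ≤ R ^ n :=
      (pow_le_pow_left₀ (abs_nonneg y) abs_y_le _).trans
        (pow_le_pow_right₀ one_le_R (Nat.sub_le n 1))
    have n_le : (n : ℝ) ≤ 2 ^ n := by exact_mod_cast Nat.lt_two_pow_self.le
    rw [norm_eq_abs, abs_mul, abs_div, abs_mul, abs_pow, Nat.abs_cast, Nat.abs_cast, mul_pow]
    gcongr
  have deriv_hasSum : HasSum (fun n : ℕ => n * r ^ (n - 1) / n ! * a n) A' := by
    rw [← hasSum_nat_add_iff' 1]
    convert! hA' using 1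
    · funext n
      rw [Nat.factorial_succ, Nat.add_sub_cancel]
      push_cast
      field_simp
    · simp
  have tsum_eq : A = fun s => ∑' n : ℕ, s ^ n / n ! * a n := funext fun s => (hA s).tsum_eq.symm
  rw [tsum_eq, ← deriv_hasSum.tsum_eq]
  exact hasDerivAt_tsum_of_isPreconnected majorant Metric.isOpen_ball
    (convex_ball (0 : ℝ) R).isPreconnected
    (fun n y _ => ((hasDerivAt_pow n y).div_const _).mul_const _) deriv_le r_mem
    (hA r).summable r_mem

theorem HasPoissonMean.hasDerivAt {M : ℝ → ℝ} (hM : ∀ s, HasPoissonMean a s (M s))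
    (hΔ : HasPoissonMean (fun n => a (n + 1) - a n) r m) : HasDerivAt M m r := by
  have shift : HasPoissonMean (fun n => a (n + 1)) r (m + M r) := by
    simpa only [sub_add_cancel] using hΔ.add (hM r)
  have exp_mul_deriv : HasDerivAt (fun s => exp s * M s) (exp r * (m + M r)) r :=
    hasDerivAt_of_hasSum_pow_div_factorial (fun s => hasPoissonMean_iff.mp (hM s))
      (hasPoissonMean_iff.mp shift)
  convert! (hasDerivAt_neg r).exp.mul exp_mul_deriv using 1
  · funext s
    simp [Pi.mul_apply, ← mul_assoc, ← exp_add]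
  · rw [exp_neg]
    field_simp
    ring

end PoissonMean

section Harmonic

theorem log_one_add_div_one_sub_le {y : ℝ} (hy₀ : 0 ≤ y) (hy₁ : y < 1) :
    log ((1 + y) / (1 - y)) ≤ 2 * y + 2 / 3 * y ^ 3 / (1 - y ^ 2) ^ 2 := by
  have sq_lt : 0 < 1 - y ^ 2 := by nlinarith
  have series : 1 / 2 * log ((1 + y) / (1 - y)) ≤
      y + y ^ 3 / 3 + y ^ 5 / 5 + y ^ 7 / (1 - y ^ 2) := by
    convert log_div_le_sum_range_add hy₀ hy₁ 3 using 2
    norm_num [sum_range_succ]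
  have remainder : y ^ 3 / (3 * (1 - y ^ 2) ^ 2) - (y ^ 3 / 3 + y ^ 5 / 5 + y ^ 7 / (1 - y ^ 2)) =
      y ^ 5 * (7 - 14 * y ^ 2 + 12 * y ^ 4) / (15 * (1 - y ^ 2) ^ 2) := by
    field_simp
    ring
  have remainder_nonneg : 0 ≤ y ^ 5 * (7 - 14 * y ^ 2 + 12 * y ^ 4) / (15 * (1 - y ^ 2) ^ 2) := by
    have : 0 ≤ 7 - 14 * y ^ 2 + 12 * y ^ 4 := by nlinarith [sq_nonneg (12 * y ^ 2 - 7)]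
    positivity
  have : 2 / 3 * y ^ 3 / (1 - y ^ 2) ^ 2 = 2 * (y ^ 3 / (3 * (1 - y ^ 2) ^ 2)) := by
    field_simp
  linarith

theorem log_add_one_sub_log_le {t : ℝ} (ht : 0 < t) :
    log (t + 1) - log t ≤
      (t + 1 / 2)⁻¹ + (1 / (24 * t ^ 2) - 1 / (24 * (t + 1) ^ 2)) := by
  have bound := log_one_add_div_one_sub_le (y := 1 / (2 * t + 1)) (by positivity)
    (by rw [div_lt_one (by positivity)]; linarith)
  have ratio : (1 + 1 / (2 * t + 1)) / (1 - 1 / (2 * t + 1)) = (t + 1) / t := by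
    have : 1 - 1 / (2 * t + 1) = 2 * t / (2 * t + 1) := by
      field_simp
      ring
    rw [this]
    field_simp
    ring
  have one_sub_sq : 1 - (1 / (2 * t + 1)) ^ 2 = 4 * t * (t + 1) / (2 * t + 1) ^ 2 := by
    field_simp
    ring
  rw [ratio, one_sub_sq, log_div (by positivity) ht.ne'] at bound
  refine bound.trans_eq ?_
  field_simp
  ring

theorem cast_harmonic_succ (n : ℕ) : (harmonic (n + 1) : ℝ) = harmonic n + ((n : ℝ) + 1)⁻¹ := by
  rw [harmonic_succ]
  push_cast
  rfl

theorem abs_harmonic_le (n : ℕ) : |(harmonic n : ℝ)| ≤ n := by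
  induction n with
  | zero => simp
  | succ n ih =>
    have inv_le : |((n : ℝ) + 1)⁻¹| ≤ 1 := by
      rw [abs_of_pos (by positivity)]
      exact inv_le_one_of_one_le₀ (by linarith [n.cast_nonneg' (α := ℝ)])
    rw [cast_harmonic_succ, Nat.cast_succ]
    exact (abs_add_le _ _).trans (add_le_add ih inv_le)

theorem monotone_harmonic_sub_log_add_half_sub : Monotone fun n : ℕ =>
    (harmonic n : ℝ) - log (n + 1 / 2) - 1 / (24 * ((n : ℝ) + 1 / 2) ^ 2) := by
  refine monotone_nat_of_le_succ fun n => ?_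
  have step := log_add_one_sub_log_le (t := (n : ℝ) + 1 / 2) (by positivity)
  rw [show (n : ℝ) + 1 / 2 + 1 / 2 = n + 1 by ring, add_right_comm] at step
  rw [cast_harmonic_succ, Nat.cast_succ]
  linarith

theorem tendsto_harmonic_sub_log_add (y : ℝ) :
    Tendsto (fun n : ℕ => (harmonic n : ℝ) - log (n + y)) atTop (𝓝 eulerMascheroniConstant) := by
  simpa using tendsto_harmonic_sub_log.sub
    ((tendsto_log_comp_add_sub_log y).comp tendsto_natCast_atTop_atTop)

theorem harmonic_le_eulerMascheroniConstant_add_log_add_half (n : ℕ) :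
    (harmonic n : ℝ) ≤
      eulerMascheroniConstant + log (n + 1 / 2) + 1 / (24 * ((n : ℝ) + 1 / 2) ^ 2) := by
  have correction_tendsto :
      Tendsto (fun n : ℕ => 1 / (24 * ((n : ℝ) + 1 / 2) ^ 2)) atTop (𝓝 0) := by
    refine tendsto_const_nhds.div_atTop (Tendsto.const_mul_atTop (by norm_num) ?_)
    exact (tendsto_pow_atTop two_ne_zero).comp
      (tendsto_natCast_atTop_atTop.atTop_add tendsto_const_nhds)
  have limit := (tendsto_harmonic_sub_log_add (1 / 2)).sub correction_tendsto
  rw [sub_zero] at limit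
  linarith [monotone_harmonic_sub_log_add_half_sub.ge_of_tendsto limit n]

theorem eulerMascheroniConstant_add_log_sub_inv_le_harmonic (n : ℕ) :
    eulerMascheroniConstant + log (n + 1) - ((n : ℝ) + 1)⁻¹ ≤ harmonic n := by
  have := eulerMascheroniConstant_lt_eulerMascheroniSeq' (n + 1)
  rw [eulerMascheroniSeq', if_neg n.succ_ne_zero, cast_harmonic_succ, Nat.cast_succ] at this
  linarith

end Harmonic

/-- An upper bound for the error `1 / (24 * (n + 1 / 2) ^ 2)` of the approximation of `H_n - γ` by
`log (n + 1 / 2)`, chosen so that its Poisson expectation has a closed form. -/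
noncomputable def harmonicError (n : ℕ) : ℝ :=
  2 / 25 * (((n : ℝ) + 1) * (n + 2))⁻¹ +
    ((Pi.single 0 (13 / 100) : ℕ → ℝ) n + (Pi.single 1 (1 / 100) : ℕ → ℝ) n)

theorem one_div_sq_le_harmonicError (n : ℕ) :
    1 / (24 * ((n : ℝ) + 1 / 2) ^ 2) ≤ harmonicError n := by
  match n with
  | 0 => norm_num [harmonicError]
  | 1 => norm_num [harmonicError]
  | n + 2 =>
    have : harmonicError (n + 2) = 2 / 25 * (((n : ℝ) + 3) * (n + 4))⁻¹ := by
      rw [harmonicError, Pi.single_eq_of_ne (by lia), Pi.single_eq_of_ne (by lia)]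
      push_cast
      ring
    rw [this, ← div_eq_mul_inv, div_le_div_iff₀ (by positivity) (by positivity)]
    push_cast
    nlinarith [n.cast_nonneg' (α := ℝ)]

/-- The expectation of `harmonicError` under the Poisson law of mean `r ≠ 0`. -/
noncomputable def harmonicErrorMean (r : ℝ) : ℝ :=
  2 / 25 * ((1 - exp (-r) * (1 + r)) / r ^ 2) + exp (-r) * (13 / 100 + r / 100)

theorem hasPoissonMean_harmonicError {r : ℝ} (hr : r ≠ 0) :
    HasPoissonMean harmonicError r (harmonicErrorMean r) := by
  convert ((hasPoissonMean_inv_add_one_mul_add_two hr).const_mul (2 / 25)).add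
    ((hasPoissonMean_single 0 (13 / 100) r).add (hasPoissonMean_single 1 (1 / 100) r)) using 1
  · rfl
  · simp only [harmonicErrorMean, pow_zero, pow_one, Nat.factorial_zero, Nat.factorial_one,
      Nat.cast_one]
    ring

theorem exists_hasPoissonMean_harmonic (r : ℝ) :
    ∃ m, HasPoissonMean (fun n => (harmonic n : ℝ)) r m := by
  refine exists_hasPoissonMean_of_abs_le_geometric (C := 1) (q := 2) (fun n => ?_) r
  rw [one_mul]
  exact (abs_harmonic_le n).trans (by exact_mod_cast Nat.lt_two_pow_self.le)

theorem exists_hasPoissonMean_log_add_half (r : ℝ) :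
    ∃ m, HasPoissonMean (fun n => log ((n : ℝ) + 1 / 2)) r m := by
  refine exists_hasPoissonMean_of_abs_le_geometric (C := 1) (q := 2) (fun n => ?_) r
  have two_pow : (n : ℝ) + 1 ≤ 2 ^ n := by exact_mod_cast Nat.lt_two_pow_self
  have inv_le : ((n : ℝ) + 1 / 2)⁻¹ ≤ 2 :=
    inv_le_of_inv_le₀ two_pos (by linarith [n.cast_nonneg' (α := ℝ)])
  have lower := one_sub_inv_le_log_of_pos (x := (n : ℝ) + 1 / 2) (by positivity)
  have upper := log_le_sub_one_of_pos (x := (n : ℝ) + 1 / 2) (by positivity)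
  rw [abs_le]
  constructor <;> linarith [n.cast_nonneg' (α := ℝ)]

theorem eulerMascheroniConstant_add_log_sub_inv_le_of_hasPoissonMean_harmonic {r m : ℝ}
    (hr : 0 < r) (hm : HasPoissonMean (fun n => (harmonic n : ℝ)) r m) :
    eulerMascheroniConstant + log r - r⁻¹ ≤ m := by
  have tangent := (hasPoissonMean_const (eulerMascheroniConstant + log r + 1) r).sub
    ((hasPoissonMean_inv_add_one hr.ne').const_mul (r + 1))
  have tangent_le := tangent.mono hr.le hm fun n => by
    have log_ge := one_sub_inv_le_log_of_pos (x := ((n : ℝ) + 1) / r) (by positivity)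
    rw [log_div (by positivity) hr.ne', inv_div, div_eq_mul_inv] at log_ge
    linarith [eulerMascheroniConstant_add_log_sub_inv_le_harmonic n]
  have mean_eq : (r + 1) * ((1 - exp (-r)) / r) = 1 + r⁻¹ - exp (-r) * (1 + r⁻¹) := by
    field_simp
  have : 0 ≤ exp (-r) * (1 + r⁻¹) := by positivity
  linarith

theorem antitoneOn_sub_log_sub_exp_neg_div_of_hasPoissonMean_harmonic {M : ℝ → ℝ}
    (hM : ∀ s, HasPoissonMean (fun n => (harmonic n : ℝ)) s (M s)) :
    AntitoneOn (fun s => M s - log s - exp (-s) / (s + 1)) (Set.Ioi 0) := by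
  have derivative {s : ℝ} (hs : 0 < s) :
      HasDerivAt (fun s => M s - log s - exp (-s) / (s + 1))
        (-(exp (-s) / (s * (s + 1) ^ 2))) s := by
    have M_deriv : HasDerivAt M ((1 - exp (-s)) / s) s :=
      HasPoissonMean.hasDerivAt hM <| by
        simpa only [cast_harmonic_succ, add_sub_cancel_left] using hasPoissonMean_inv_add_one hs.ne'
    convert! (M_deriv.sub (hasDerivAt_log hs.ne')).sub
      ((hasDerivAt_neg s).exp.div ((hasDerivAt_id s).add_const 1) (add_pos hs one_pos).ne') using 1
    simp only [id]
    field_simp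
    ring
  refine antitoneOn_of_hasDerivWithinAt_nonpos (convex_Ioi 0)
    (fun s hs => (derivative hs).continuousAt.continuousWithinAt)
    (fun s hs => (derivative (interior_subset hs)).hasDerivWithinAt) fun s hs => ?_
  have : 0 < s := interior_subset hs
  exact neg_nonpos.mpr (by positivity)

theorem eulerMascheroniConstant_add_log_add_exp_neg_div_le_of_hasPoissonMean_harmonic {r m : ℝ}
    (hr : 0 < r) (hm : HasPoissonMean (fun n => (harmonic n : ℝ)) r m) :
    eulerMascheroniConstant + log r + exp (-r) / (r + 1) ≤ m := by
  choose M hM using exists_hasPoissonMean_harmonic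
  have limit : Tendsto (fun s : ℝ => eulerMascheroniConstant - s⁻¹ - exp (-s)) atTop
      (𝓝 eulerMascheroniConstant) := by
    simpa using (tendsto_const_nhds.sub tendsto_inv_atTop_zero).sub tendsto_exp_neg_atTop_nhds_zero
  have : eulerMascheroniConstant ≤ M r - log r - exp (-r) / (r + 1) := by
    refine le_of_tendsto limit ?_
    filter_upwards [eventually_ge_atTop r] with s hrs
    have hs : 0 < s := hr.trans_le hrs
    have decreasing : M s - log s - exp (-s) / (s + 1) ≤ M r - log r - exp (-r) / (r + 1) :=
      antitoneOn_sub_log_sub_exp_neg_div_of_hasPoissonMean_harmonic hM hr hs hrs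
    have : exp (-s) / (s + 1) ≤ exp (-s) := div_le_self (exp_pos _).le (by linarith)
    linarith [eulerMascheroniConstant_add_log_sub_inv_le_of_hasPoissonMean_harmonic hs (hM s)]
  rw [hm.unique (hM r)]
  linarith

theorem log_add_exp_neg_div_sub_le_of_hasPoissonMean_log_add_half {r m : ℝ} (hr : 0 < r)
    (hm : HasPoissonMean (fun n => log ((n : ℝ) + 1 / 2)) r m) :
    log r + exp (-r) / (r + 1) - harmonicErrorMean r ≤ m := by
  obtain ⟨h, hh⟩ := exists_hasPoissonMean_harmonic r
  have := hh.mono hr.le (((hasPoissonMean_const eulerMascheroniConstant r).add hm).add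
    (hasPoissonMean_harmonicError hr.ne')) fun n =>
      (harmonic_le_eulerMascheroniConstant_add_log_add_half n).trans
        (add_le_add_right (one_div_sq_le_harmonicError n) _)
  linarith [eulerMascheroniConstant_add_log_add_exp_neg_div_le_of_hasPoissonMean_harmonic hr hh]

theorem f_eq_mul_sub_log {r m : ℝ} (hr : 0 < r)
    (hm : HasPoissonMean (fun n => log ((n : ℝ) + 1 / 2)) r m) : f r = r * (m - log r) := by
  have mean := hm.sub (hasPoissonMean_const (log r) r)
  rw [f, ← mean.tsum_eq]
  refine congrArg (r * ·) (tsum_congr fun n => ?_)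
  rw [log_div (by positivity) hr.ne']
  ring

theorem four_sub_mul_exp_lt_of_le_one {r : ℝ} (hr : 0 < r) (hr₁ : r ≤ 1) :
    (4 - r) * exp r < 4 * (1 + r) + 50 * r ^ 2 / (r + 1) - 13 / 2 * r ^ 2 - r ^ 3 / 2 := by
  have exp_le : exp r ≤ 1 + r + r ^ 2 := by
    have := abs_exp_sub_one_sub_id_le (x := r) (by rwa [abs_of_pos hr])
    linarith [(abs_le.mp this).2]
  have : 25 * r ^ 2 ≤ 50 * r ^ 2 / (r + 1) := by
    rw [le_div_iff₀ (by positivity)]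
    nlinarith [sq_nonneg r]
  nlinarith [mul_le_mul_of_nonneg_left exp_le (by linarith : 0 ≤ 4 - r), pow_pos hr 2, pow_pos hr 3]

theorem four_sub_mul_exp_le_exp_three (r : ℝ) : (4 - r) * exp r ≤ exp 3 :=
  calc (4 - r) * exp r ≤ exp (3 - r) * exp r := by
        gcongr
        linarith [add_one_le_exp (3 - r)]
    _ = exp 3 := by rw [← exp_add, sub_add_cancel]

theorem four_sub_mul_exp_lt_of_mem_Icc {r : ℝ} (hr : r ∈ Set.Icc 1 4) :
    (4 - r) * exp r < 4 * (1 + r) + 50 * r ^ 2 / (r + 1) - 13 / 2 * r ^ 2 - r ^ 3 / 2 := by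
  obtain ⟨hr₁, hr₄⟩ := hr
  have exp_three_lt : exp 3 < 21 :=
    calc exp 3 = exp 1 ^ 3 := by rw [← exp_nat_mul]; norm_num
      _ < 2.7182818286 ^ 3 := by gcongr; exact exp_one_lt_d9
      _ < 21 := by norm_num
  have : 21 - 4 * (1 + r) + 13 / 2 * r ^ 2 + r ^ 3 / 2 ≤ 50 * r ^ 2 / (r + 1) := by
    have : 0 ≤ (r - 1) * (4 - r) := mul_nonneg (by linarith) (by linarith)
    rw [le_div_iff₀ (by linarith)]
    nlinarith [mul_nonneg this (by linarith : 0 ≤ r), mul_nonneg this (sq_nonneg r)]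
  linarith [four_sub_mul_exp_le_exp_three r]

theorem four_sub_mul_exp_lt_of_four_le {r : ℝ} (hr : 4 ≤ r) :
    (4 - r) * exp r < 4 * (1 + r) + 50 * r ^ 2 / (r + 1) - 13 / 2 * r ^ 2 - r ^ 3 / 2 := by
  have exp_four_gt : 50 < exp 4 :=
    calc (50 : ℝ) < 2.7182818283 ^ 4 := by norm_num
      _ < exp 1 ^ 4 := by gcongr; exact exp_one_gt_d9
      _ = exp 4 := by rw [← exp_nat_mul]; norm_num
  obtain ⟨t, ht, rfl⟩ := exists_nonneg_add_of_le hr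
  have exp_ge : 50 * (1 + t + t ^ 2 / 2) ≤ exp (4 + t) := by
    rw [exp_add]
    gcongr
    exact quadratic_le_exp_of_nonneg ht
  have : 50 * (3 + t) ≤ 50 * (4 + t) ^ 2 / (4 + t + 1) := by
    rw [le_div_iff₀ (by positivity)]
    nlinarith
  nlinarith [mul_le_mul_of_nonneg_left exp_ge ht, pow_nonneg ht 2, pow_nonneg ht 3]

theorem four_sub_mul_exp_lt {r : ℝ} (hr : 0 < r) :
    (4 - r) * exp r < 4 * (1 + r) + 50 * r ^ 2 / (r + 1) - 13 / 2 * r ^ 2 - r ^ 3 / 2 := by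
  rcases le_total r 1 with hr₁ | hr₁
  · exact four_sub_mul_exp_lt_of_le_one hr hr₁
  rcases le_total r 4 with hr₄ | hr₄
  · exact four_sub_mul_exp_lt_of_mem_Icc ⟨hr₁, hr₄⟩
  · exact four_sub_mul_exp_lt_of_four_le hr₄

theorem neg_one_div_fifty_lt_mul_exp_neg_div_sub {r : ℝ} (hr : 0 < r) :
    -(1 / 50) < r * (exp (-r) / (r + 1) - harmonicErrorMean r) := by
  have factored : r * (exp (-r) / (r + 1) - harmonicErrorMean r) + 1 / 50 =
      exp (-r) / (50 * r) * (4 * (1 + r) + 50 * r ^ 2 / (r + 1) - 13 / 2 * r ^ 2 - r ^ 3 / 2 -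
        (4 - r) * exp r) := by
    rw [harmonicErrorMean, exp_neg]
    field_simp
    ring
  rw [neg_lt_iff_pos_add, factored]
  exact mul_pos (by positivity) (sub_pos.mpr (four_sub_mul_exp_lt hr))

theorem stmt_7 (lam : ℝ) (hlam : 0 < lam) : f lam > -0.02 := by
  obtain ⟨m, hm⟩ := exists_hasPoissonMean_log_add_half lam
  have mean_ge := log_add_exp_neg_div_sub_le_of_hasPoissonMean_log_add_half hlam hm
  calc f lam = lam * (m - log lam) := f_eq_mul_sub_log hlam hm
    _ ≥ lam * (exp (-lam) / (lam + 1) - harmonicErrorMean lam) :=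
      mul_le_mul_of_nonneg_left (by linarith) hlam.le
    _ > -(1 / 50) := neg_one_div_fifty_lt_mul_exp_neg_div_sub hlam
    _ = -0.02 := by norm_num
end
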